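/- arXiv:2602.01384 — 3 statements merged into one kernel-verified Lean document; each statement's English description precedes it below -/
import Mathlib

section
/- The elliptic curve C₉ : y² = x³ − 27 over ℚ has exactly one affine rational point, namely (3, 0). -/
/-!
Put `u = x - 3`, so that the curve becomes `y² = u (u² + 9 u + 27)`. This cubic has the rational
root `u = 0`, and a rational point with `u ≠ 0` gives, after clearing denominators and separating
square classes, a coprime integer point with `e ≠ 0` on the quartic
`N² = M⁴ + 9 M² e² + 27 e⁴`. The congruences modulo 8 and 9 show that `e` is even and `3 ∤ M`.
Writing `e = 2 f`, the difference of squares `N² - (M² + 18 f²)² = 108 f⁴` splits into coprime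
factors, which yields `f = a b` with `(b² - 9 a²)² - M² = 108 a⁴`. Splitting this difference of
squares in the same way gives `a = c d` and a point `(c, d, b)` on the original quartic, where `d`
divides `f`. As `0 < |d| ≤ |f| < |e|`, Fermat's infinite descent excludes all such points.
-/

theorem exists_pow_of_isCoprime_of_mul_eq_pow {x y z : ℤ} {k : ℕ} (hk : k ≠ 0) (hx : 0 ≤ x)
    (hy : 0 ≤ y) (hxy : IsCoprime x y) (h : x * y = z ^ k) :
    ∃ a b : ℤ, z = a * b ∧ x = a ^ k ∧ y = b ^ k := by
  have eq_abs_pow {u v : ℤ} (hu : 0 ≤ u) (huv : Associated (v ^ k) u) : u = |v| ^ k := by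
    rw [← abs_pow, ← abs_of_nonneg hu]
    rw [Int.abs_eq_natAbs, Int.abs_eq_natAbs, Int.associated_iff_natAbs.1 huv]
  obtain ⟨a, ha⟩ := exists_associated_pow_of_mul_eq_pow' hxy h
  obtain ⟨b, hb⟩ := exists_associated_pow_of_mul_eq_pow' hxy.symm (mul_comm x y ▸ h)
  have hxa := eq_abs_pow hx ha
  have hyb := eq_abs_pow hy hb
  have hz : z ^ k = (|a| * |b|) ^ k := by rw [← h, hxa, hyb, mul_pow]
  rcases (pow_eq_pow_iff_of_ne_zero hk).1 hz with hz | ⟨hz, hk⟩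
  · exact ⟨|a|, |b|, hz, hxa, hyb⟩
  · exact ⟨-|a|, |b|, by rw [hz, neg_mul], by rwa [hk.neg_pow], hyb⟩

theorem exists_pow_of_isCoprime_of_mul_eq_prime_pow_mul {p x y z : ℤ} {j k : ℕ} (hp : Prime p)
    (hp0 : 0 < p) (hk : k ≠ 0) (hx : 0 ≤ x) (hy : 0 ≤ y) (hxy : IsCoprime x y)
    (h : x * y = p ^ j * z ^ k) :
    ∃ a b : ℤ, z = a * b ∧
      ((x = p ^ j * a ^ k ∧ y = b ^ k) ∨ (y = p ^ j * a ^ k ∧ x = b ^ k)) := by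
  wlog hpy : IsCoprime p y generalizing x y
  · have hpx : IsCoprime p x := by
      rw [hp.coprime_iff_not_dvd] at hpy ⊢
      exact fun hpx => hp.not_isUnit (hxy.isUnit_of_dvd' hpx (not_not.1 hpy))
    obtain ⟨a, b, hz, hab⟩ := this hy hx hxy.symm (mul_comm x y ▸ h) hpx
    exact ⟨a, b, hz, hab.symm⟩
  obtain ⟨w, rfl⟩ := (hpy.pow_left (m := j)).dvd_of_dvd_mul_right ⟨z ^ k, h⟩
  have hpj : 0 < p ^ j := pow_pos hp0 j
  have hwy : w * y = z ^ k := mul_left_cancel₀ hpj.ne' (by rw [← mul_assoc, h])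
  obtain ⟨a, b, hz, rfl, hb⟩ := exists_pow_of_isCoprime_of_mul_eq_pow hk
    (nonneg_of_mul_nonneg_right hx hpj) hy hxy.of_mul_left_right hwy
  exact ⟨a, b, hz, .inl ⟨rfl, hb⟩⟩

theorem exists_squarefree_mul_sq_of_mul_eq_sq {m q z : ℤ} (hm : 0 < m) (h : m * q = z ^ 2) :
    ∃ d a b : ℤ, 0 < d ∧ Squarefree d ∧ m = d * a ^ 2 ∧ q = d * b ^ 2 := by
  lift m to ℕ using hm.le
  obtain ⟨d, a, hd, ha, rfl, hsq⟩ := Nat.sq_mul_squarefree_of_pos (Int.natCast_pos.1 hm)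
  push_cast at h
  have hd0 : (d : ℤ) ≠ 0 := by exact_mod_cast hd.ne'
  have ha0 : (a : ℤ) ≠ 0 := by exact_mod_cast ha.ne'
  obtain ⟨w, rfl⟩ : (a : ℤ) ∣ z := (Int.pow_dvd_pow_iff two_ne_zero).1 ⟨d * q, by rw [← h]; ring⟩
  have hdq : d * q = w ^ 2 := mul_left_cancel₀ (pow_ne_zero 2 ha0) (by linear_combination h)
  have hsq' : Squarefree (d : ℤ) := Int.squarefree_natCast.2 hsq
  obtain ⟨b, rfl⟩ : (d : ℤ) ∣ w := (hsq'.dvd_pow_iff_dvd two_ne_zero).1 ⟨q, hdq.symm⟩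
  refine ⟨d, a, b, by exact_mod_cast hd, hsq', by push_cast; ring, ?_⟩
  exact mul_left_cancel₀ hd0 (by linear_combination hdq)

theorem exists_mul_eq_of_sq_eq_sq_add {s t c : ℤ} (hst : IsCoprime s t)
    (h : s ^ 2 = t ^ 2 + 4 * c) :
    ∃ x y : ℤ, IsCoprime x y ∧ x * y = c ∧ s = x + y ∧ t = y - x := by
  have hpar : Even (s - t) := by
    have : Even (s ^ 2 - t ^ 2) := ⟨2 * c, by rw [h]; ring⟩
    simpa only [Int.even_sub, Int.even_pow' two_ne_zero] using this
  obtain ⟨x, hx⟩ := hpar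
  obtain rfl : s = t + (x + x) := by linarith
  refine ⟨x, t + x, ?_, by linarith, by ring, by ring⟩
  obtain ⟨u, v, huv⟩ := hst
  exact ⟨u - v, u + v, by linear_combination huv⟩

theorem isCoprime_of_sq_eq_sq_add {R : Type*} [CommRing R] {s t c : R} (ht : IsCoprime t c)
    (h : s ^ 2 = t ^ 2 + c) : IsCoprime s t := by
  have : IsCoprime (t * t + c) t := ht.symm.mul_add_left_left t
  rw [← sq, ← h] at this
  exact (IsCoprime.pow_left_iff two_pos).1 this

theorem exists_abs_eq_of_sq_eq_sq_add {p s t z : ℤ} {j k : ℕ} (hp : Prime p) (hp0 : 0 < p)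
    (hk : k ≠ 0) (hke : Even k) (ht : IsCoprime t (2 * p * z))
    (h : s ^ 2 = t ^ 2 + 4 * (p ^ j * z ^ k)) :
    ∃ a b : ℤ, z = a * b ∧ IsCoprime a b ∧
      |s| = p ^ j * a ^ k + b ^ k ∧ |t| = |b ^ k - p ^ j * a ^ k| := by
  obtain ⟨⟨ht2, htp⟩, htz⟩ : (IsCoprime t 2 ∧ IsCoprime t p) ∧ IsCoprime t z := by
    simpa only [IsCoprime.mul_right_iff] using ht
  have htc : IsCoprime t (4 * (p ^ j * z ^ k)) :=
    (show IsCoprime t (2 ^ 2) from ht2.pow_right).mul_right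
      (htp.pow_right.mul_right htz.pow_right)
  rw [← sq_abs s] at h
  obtain ⟨x, y, hxy, hmul, hs, rfl⟩ :=
    exists_mul_eq_of_sq_eq_sq_add (isCoprime_of_sq_eq_sq_add htc h) h
  have hmul0 : 0 ≤ x * y := hmul ▸ mul_nonneg (pow_pos hp0 j).le (hke.pow_nonneg z)
  have hadd0 : 0 ≤ x + y := hs ▸ abs_nonneg s
  obtain ⟨hx, hy⟩ : 0 ≤ x ∧ 0 ≤ y := by
    rcases mul_nonneg_iff.1 hmul0 with hxy0 | ⟨hx, hy⟩
    · exact hxy0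
    · constructor <;> linarith
  have isCoprime_roots {a b : ℤ} (hab : IsCoprime (p ^ j * a ^ k) (b ^ k)) : IsCoprime a b :=
    (IsCoprime.pow_iff hk.bot_lt hk.bot_lt).1 hab.of_mul_left_right
  obtain ⟨a, b, hz, ⟨rfl, rfl⟩ | ⟨rfl, rfl⟩⟩ :=
    exists_pow_of_isCoprime_of_mul_eq_prime_pow_mul hp hp0 hk hx hy hxy hmul
  · exact ⟨a, b, hz, isCoprime_roots hxy, hs, rfl⟩
  · exact ⟨a, b, hz, isCoprime_roots hxy.symm, by rw [hs, add_comm], abs_sub_comm _ _⟩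

/-- An integer point, in coprime weighted coordinates `(M : e : N)` and away from `e = 0`, on the
quartic covering `N² = M⁴ + 9 M² e² + 27 e⁴` of `y² = u (u² + 9 u + 27)` that sends it to
`u = (M / e)²`. -/
structure IsQuarticPoint (M e N : ℤ) : Prop where
  ne_zero : e ≠ 0
  isCoprime : IsCoprime M e
  sq_eq : N ^ 2 = M ^ 4 + 9 * M ^ 2 * e ^ 2 + 27 * e ^ 4

namespace IsQuarticPoint

variable {M e N : ℤ}

theorem even (h : IsQuarticPoint M e N) : Even e := by
  have four_mul_eq_zero : ∀ x y z : ZMod 8,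
      z ^ 2 = x ^ 4 + 9 * x ^ 2 * y ^ 2 + 27 * y ^ 4 → 4 * y = 0 := by decide
  have h8 : ((4 * e : ℤ) : ZMod 8) = 0 := by
    simpa using four_mul_eq_zero M e N (by exact_mod_cast congrArg (Int.cast : ℤ → ZMod 8) h.sq_eq)
  rw [ZMod.intCast_zmod_eq_zero_iff_dvd] at h8
  rw [Int.even_iff]
  omega

theorem isCoprime_three (h : IsQuarticPoint M e N) : IsCoprime M 3 := by
  refine (Int.prime_three.coprime_iff_not_dvd.2 fun hM => ?_).symm
  have he : (3 : ℤ) ∣ e := by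
    have hN := h.sq_eq
    obtain ⟨m, rfl⟩ := hM
    obtain ⟨n, rfl⟩ : (3 : ℤ) ∣ N := Int.prime_three.dvd_of_dvd_pow (n := 2)
      ⟨27 * m ^ 4 + 27 * m ^ 2 * e ^ 2 + 9 * e ^ 4, by linear_combination hN⟩
    obtain ⟨l, rfl⟩ : (3 : ℤ) ∣ n := Int.prime_three.dvd_of_dvd_pow (n := 2)
      ⟨3 * m ^ 4 + 3 * m ^ 2 * e ^ 2 + e ^ 4, by linarith⟩
    exact Int.prime_three.dvd_of_dvd_pow (n := 4) ⟨l ^ 2 - m ^ 4 - m ^ 2 * e ^ 2, by linarith⟩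
  exact Int.prime_three.not_isUnit (h.isCoprime.isUnit_of_dvd' hM he)

theorem exists_sq_eq_sq_add (h : IsQuarticPoint M e N) :
    ∃ a b : ℤ, e = 2 * (a * b) ∧ (b ^ 2 - 9 * a ^ 2) ^ 2 = M ^ 2 + 4 * (3 ^ 3 * a ^ 4) := by
  obtain ⟨f, rfl⟩ := h.even.two_dvd
  have hM3 := h.isCoprime_three
  have ht : IsCoprime (M ^ 2 + 18 * f ^ 2) (2 * 3 * f) := by
    have hM : IsCoprime (M ^ 2) (2 * 3 * f) := by
      rw [mul_comm 2, mul_assoc]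
      exact (hM3.mul_right h.isCoprime).pow_left
    rw [show M ^ 2 + 18 * f ^ 2 = M ^ 2 + 2 * 3 * f * (3 * f) by ring]
    exact hM.add_mul_left_left (3 * f)
  obtain ⟨a, b, rfl, -, -, hab⟩ := exists_abs_eq_of_sq_eq_sq_add (s := N) (j := 3) (k := 4)
    Int.prime_three three_pos four_ne_zero (by decide) ht (by linear_combination h.sq_eq)
  rcases abs_eq_abs.1 hab with hab | hab
  · exact ⟨a, b, rfl, by linear_combination -hab⟩
  · exfalso
    have eq_zero : ∀ x y : ZMod 3, x ^ 2 = -y ^ 4 → x = 0 := by decide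
    have hmod : (M : ZMod 3) ^ 2 = -(b : ZMod 3) ^ 4 := by
      have key : M ^ 2 = -b ^ 4 + 3 * (9 * a ^ 4 - 6 * (a * b) ^ 2) := by linear_combination hab
      have := congrArg (Int.cast : ℤ → ZMod 3) key
      push_cast at this
      rwa [show (3 : ZMod 3) = 0 from rfl, zero_mul, add_zero] at this
    have h3M : (3 : ℤ) ∣ M := (ZMod.intCast_zmod_eq_zero_iff_dvd M 3).1 (eq_zero _ _ hmod)
    exact Int.prime_three.not_isUnit (hM3.isUnit_of_dvd' h3M dvd_rfl)

theorem exists_of_sq_eq_sq_add {a b : ℤ} (ha : a ≠ 0) (hM : IsCoprime M (2 * 3 * a))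
    (h : (b ^ 2 - 9 * a ^ 2) ^ 2 = M ^ 2 + 4 * (3 ^ 3 * a ^ 4)) :
    ∃ c d : ℤ, d ∣ a ∧ IsQuarticPoint c d b := by
  obtain ⟨d, c, rfl, hdc, hs, -⟩ := exists_abs_eq_of_sq_eq_sq_add
    Int.prime_three three_pos four_ne_zero (by decide) hM h
  have hd : d ≠ 0 := left_ne_zero_of_mul ha
  refine ⟨c, d, dvd_mul_right d c, hd, hdc.symm, ?_⟩
  rcases abs_eq (by positivity) |>.1 hs with hs | hs
  · linear_combination hs
  · -- The negative sign is impossible: `c⁴ - 9 c² d² + 27 d⁴` is positive definite.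
    have : 0 < d ^ 4 := by positivity
    nlinarith [sq_nonneg (2 * c ^ 2 - 9 * d ^ 2), sq_nonneg b]

theorem exists_natAbs_lt (h : IsQuarticPoint M e N) :
    ∃ M' e' N' : ℤ, IsQuarticPoint M' e' N' ∧ e'.natAbs < e.natAbs := by
  obtain ⟨a, b, he, hab⟩ := h.exists_sq_eq_sq_add
  have hab0 : a * b ≠ 0 := right_ne_zero_of_mul (he ▸ h.ne_zero)
  have hM : IsCoprime M (2 * 3 * a) :=
    (h.isCoprime_three.mul_right h.isCoprime).of_isCoprime_of_dvd_right ⟨b, by rw [he]; ring⟩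
  obtain ⟨c, d, hda, hd⟩ := exists_of_sq_eq_sq_add (left_ne_zero_of_mul hab0) hM hab
  refine ⟨c, d, b, hd, ?_⟩
  have hle : d.natAbs ≤ (a * b).natAbs :=
    Int.natAbs_le_of_dvd_ne_zero (hda.trans (dvd_mul_right a b)) hab0
  omega

end IsQuarticPoint

theorem not_isQuarticPoint (M e N : ℤ) : ¬ IsQuarticPoint M e N := by
  induction hn : e.natAbs using Nat.strong_induction_on generalizing M e N with
  | _ n ih =>
    intro h
    obtain ⟨M', e', N', h', hlt⟩ := h.exists_natAbs_lt
    exact ih _ (hn ▸ hlt) M' e' N' rfl h'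

theorem exists_isQuarticPoint_of_mul_eq_sq {m e z : ℤ} (hm : 0 < m) (he : e ≠ 0)
    (hme : IsCoprime m e) (h : m * (m ^ 2 + 9 * m * e ^ 2 + 27 * e ^ 4) = z ^ 2) :
    ∃ M' e' N' : ℤ, IsQuarticPoint M' e' N' := by
  obtain ⟨d, a, b, hd0, hd, rfl, hb⟩ := exists_squarefree_mul_sq_of_mul_eq_sq hm h
  obtain ⟨hde, hae⟩ := IsCoprime.mul_left_iff.1 hme
  rw [IsCoprime.pow_left_iff two_pos] at hae
  have hd27 : d ∣ 3 ^ 3 := hde.pow_right.dvd_of_dvd_mul_right (z := e ^ 4)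
    ⟨b ^ 2 - a ^ 2 * (d * a ^ 2 + 9 * e ^ 2), by linear_combination hb⟩
  have hd3 : d ∣ 3 := (hd.dvd_pow_iff_dvd three_ne_zero).1 hd27
  obtain rfl | rfl : d = 1 ∨ d = 3 := by
    have := Int.le_of_dvd three_pos hd3
    interval_cases d <;> omega
  · exact ⟨a, e, b, he, hae, by linear_combination -hb⟩
  · -- In this square class `a = 3 i`, and translation by the 2-torsion point, `u ↦ 27 / u`,
    -- swaps the roles of `i` and `e`.
    obtain ⟨c, rfl⟩ : (3 : ℤ) ∣ b := Int.prime_three.dvd_of_dvd_pow (n := 2)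
      ⟨a ^ 4 + 3 * a ^ 2 * e ^ 2 + 3 * e ^ 4, by linarith⟩
    obtain ⟨i, rfl⟩ : (3 : ℤ) ∣ a := Int.prime_three.dvd_of_dvd_pow (n := 4)
      ⟨c ^ 2 - a ^ 2 * e ^ 2 - e ^ 4, by linarith⟩
    refine ⟨e, i, c, ?_, hae.symm.of_mul_right_right, by linarith⟩
    rintro rfl
    simp at hm

theorem not_isSquare_mul_of_isCoprime {m n : ℤ} (hm : 0 < m) (hn : 0 < n) (hmn : IsCoprime m n) :
    ¬ IsSquare (n * (m * (m ^ 2 + 9 * m * n + 27 * n ^ 2))) := by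
  rintro ⟨y, hy⟩
  have hcop : IsCoprime n (m * (m ^ 2 + 9 * m * n + 27 * n ^ 2)) := by
    refine hmn.symm.mul_right ?_
    rw [show m ^ 2 + 9 * m * n + 27 * n ^ 2 = m ^ 2 + n * (9 * m + 27 * n) by ring]
    exact hmn.symm.pow_right.add_mul_left_right _
  obtain ⟨e, z, -, rfl, hz⟩ := exists_pow_of_isCoprime_of_mul_eq_pow two_ne_zero hn.le
    (by positivity) hcop (hy.trans (sq y).symm)
  have he : e ≠ 0 := (pow_ne_zero_iff two_ne_zero).1 hn.ne'
  obtain ⟨M, e', N, h⟩ := exists_isQuarticPoint_of_mul_eq_sq hm he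
    ((IsCoprime.pow_right_iff two_pos).1 hmn) (by rw [← hz]; ring)
  exact not_isQuarticPoint M e' N h

theorem eq_zero_of_sq_eq_mul {u y : ℚ} (h : y ^ 2 = u * (u ^ 2 + 9 * u + 27)) : u = 0 := by
  by_contra hu
  have hu0 : 0 < u := by
    have hquad : 0 < u ^ 2 + 9 * u + 27 := by nlinarith [sq_nonneg (2 * u + 9)]
    exact (nonneg_of_mul_nonneg_left (h ▸ sq_nonneg y) hquad).lt_of_ne' hu
  refine not_isSquare_mul_of_isCoprime (Rat.num_pos.2 hu0) (by exact_mod_cast u.den_pos)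
    (Rat.isCoprime_num_den u) (Rat.isSquare_intCast_iff.1 ⟨y * u.den ^ 2, ?_⟩)
  push_cast
  rw [← Rat.mul_den_eq_num u]
  linear_combination -(u.den : ℚ) ^ 4 * h

/-- The elliptic curve `C₉ : y² = x³ - 27` over `ℚ` has exactly one affine rational point,
namely `(3, 0)`. -/
theorem C9_rational_points :
    {p : ℚ × ℚ | p.2 ^ 2 = p.1 ^ 3 - 27} = {(3, 0)} := by
  ext ⟨x, y⟩
  simp only [Set.mem_ofPred_eq, Set.mem_singleton_iff, Prod.mk.injEq]
  constructor
  · intro h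
    have hx : x - 3 = 0 := eq_zero_of_sq_eq_mul (y := y) (by linear_combination h)
    obtain rfl : x = 3 := sub_eq_zero.1 hx
    exact ⟨rfl, pow_eq_zero_iff two_ne_zero |>.1 (by linear_combination h)⟩
  · rintro ⟨rfl, rfl⟩
    norm_num
end

section
/- The genus-one curve C₁₂ : y² = (x²−1)(x²−9) over ℚ has exactly six affine rational points: (0, 3), (0, −3), (3, 0), (−3, 0), (1, 0), and (−1, 0). -/
/-!
A point of `y² = (x² - 1)(x² - 9)` satisfies `y² + (2x)² = (x² - 3)²` and
`y² + 4(2x)² = (x² + 3)²`, so a point with `xy ≠ 0` would give coprime nonzero integers `a`, `b`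
for which both `a² + b²` and `a² + 4b²` are squares. Fermat's infinite descent rules these out. If
`a = 2a'` is even, then `(b, a')` is a smaller pair of the same kind. If `a` is odd, the two
Pythagorean triples with legs `(a, b)` and `(a, 2b)` give `a = m² - n² = p² - q²` and
`b = 2mn = pq`. If, say, `p = 2p'`, then `p'q = mn` has a common refinement `p' = rs`, `q = tk`,
`m = rt`, `n = sk`, and equating the two expressions for `a` gives
`s²(k² + 4r²) = t²(k² + r²)`. By coprimality `k² + r² = s²` and `k² + 4r² = t²`, so `(k, r)` is a
smaller pair.
-/

theorem exists_common_factorization_of_mul_eq_mul {α : Type*} [CommMonoidWithZero α]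
    [IsCancelMulZero α] [DecompositionMonoid α] {p q m n : α} (hp : p ≠ 0) (h : p * q = m * n) :
    ∃ r s t k : α, p = r * s ∧ q = t * k ∧ m = r * t ∧ n = s * k := by
  obtain ⟨r, s, ⟨t, rfl⟩, ⟨k, rfl⟩, rfl⟩ := exists_dvd_and_dvd_of_dvd_mul (Dvd.intro q h)
  exact ⟨r, s, t, k, rfl, mul_left_cancel₀ hp (h.trans (mul_mul_mul_comm r t s k)), rfl, rfl⟩

theorem exists_eq_mul_and_eq_mul_of_mul_eq_mul {R : Type*} [CommSemiring R] [IsCancelMulZero R]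
    {x y a b : R} (hxy : IsCoprime x y) (hx : x ≠ 0) (h : x * a = y * b) :
    ∃ c, a = y * c ∧ b = x * c := by
  obtain ⟨c, rfl⟩ := hxy.dvd_of_dvd_mul_left (Dvd.intro a h)
  exact ⟨c, mul_left_cancel₀ hx (h.trans (mul_left_comm y x c)), rfl⟩

theorem dvd_mul_sub_mul_of_isCoprime {R : Type*} [CommRing R] {x y a b a' b' c : R}
    (hxy : IsCoprime x y) (h : c ∣ a * x + b * y) (h' : c ∣ a' * x + b' * y) :
    c ∣ a * b' - a' * b := by
  obtain ⟨u, v, huv⟩ := hxy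
  have cramer : a * b' - a' * b =
      (u * b' - v * a') * (a * x + b * y) + (v * a - u * b) * (a' * x + b' * y) := by
    linear_combination (a' * b - a * b') * huv
  exact cramer ▸ dvd_add (h.mul_left _) (h'.mul_left _)

theorem not_prime_dvd_sq_add_sq_of_isCoprime {p : ℕ} (hp : p.Prime) (hp4 : p % 4 = 3) {x y : ℤ}
    (hxy : IsCoprime x y) : ¬(p : ℤ) ∣ x ^ 2 + y ^ 2 := by
  intro hdvd
  have : Fact p.Prime := ⟨hp⟩
  exact ZMod.exists_sq_eq_neg_one_iff.mp (ZMod.isSquare_neg_one_of_dvd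
    (Int.natCast_dvd.mp hdvd) (ZMod.isSquare_neg_one_of_eq_sq_add_sq_of_isCoprime rfl hxy)) hp4

theorem exists_pythagorean_parametrization {a b : ℤ} (hab : IsCoprime a b) (ha : Odd a)
    (h : IsSquare (a ^ 2 + b ^ 2)) :
    ∃ m n : ℤ, IsCoprime m n ∧ a = m ^ 2 - n ^ 2 ∧ b = 2 * m * n := by
  obtain ⟨c, hc⟩ := h
  have hc0 : c ≠ 0 := by
    rintro rfl
    have : a ≠ 0 := by rintro rfl; simp at ha
    have : 0 < a ^ 2 + b ^ 2 := by positivity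
    omega
  have htriple : PythagoreanTriple a b |c| := by
    rw [PythagoreanTriple, abs_mul_abs_self, ← hc]; ring
  obtain ⟨m, n, hm, hn, -, hmn, -⟩ := htriple.coprime_classification'
    (Int.isCoprime_iff_gcd_eq_one.mp hab) (Int.odd_iff.mp ha) (abs_pos.mpr hc0)
  exact ⟨m, n, Int.isCoprime_iff_gcd_eq_one.mpr hmn, hm, hn⟩

/-- A nontrivial coprime solution `(a, b)` of Euler's problem of concordant forms for the forms
`a² + b²` and `a² + 4b²`: both are to be squares. Nontriviality is `a * b ≠ 0`, and `|a * b|` is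
the quantity that the descent decreases. -/
structure IsConcordantPair (a b : ℤ) : Prop where
  isCoprime : IsCoprime a b
  mul_ne_zero : a * b ≠ 0
  isSquare_sq_add_sq : IsSquare (a ^ 2 + b ^ 2)
  isSquare_sq_add_four_mul_sq : IsSquare (a ^ 2 + 4 * b ^ 2)

theorem eq_sq_of_sq_mul_eq_sq_mul {r s t k : ℤ} (hst : IsCoprime s t) (hkr : IsCoprime k r)
    (hs : s ≠ 0) (h : s ^ 2 * (k ^ 2 + 4 * r ^ 2) = t ^ 2 * (k ^ 2 + r ^ 2)) :
    k ^ 2 + r ^ 2 = s ^ 2 ∧ k ^ 2 + 4 * r ^ 2 = t ^ 2 := by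
  obtain ⟨c, ht, hs'⟩ := exists_eq_mul_and_eq_mul_of_mul_eq_mul (hst.pow (m := 2) (n := 2))
    (pow_ne_zero 2 hs) h
  have hc_dvd : c ∣ 3 := by
    simpa using dvd_mul_sub_mul_of_isCoprime (a := 1) (b := 1) (a' := 1) (b' := 4)
      (hkr.pow (m := 2) (n := 2)) (by simp [hs']) (by simp [ht])
  have hc_ne : c ≠ 3 := by
    rintro rfl
    exact not_prime_dvd_sq_add_sq_of_isCoprime Nat.prime_three rfl hkr (Dvd.intro_left _ hs'.symm)
  have hc_nonneg : 0 ≤ c :=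
    nonneg_of_mul_nonneg_right (hs' ▸ by positivity : 0 ≤ s ^ 2 * c) (by positivity)
  have hc_one : c = 1 := by
    have hc_le : c ≤ 3 := Int.le_of_dvd (by norm_num) hc_dvd
    interval_cases c <;> omega
  rw [hc_one, mul_one] at hs' ht
  exact ⟨hs', ht⟩

theorem exists_isConcordantPair_of_two_mul_mul_eq {m n p q : ℤ} (hmn : IsCoprime m n)
    (hpq : IsCoprime (2 * p) q) (hne : 2 * p * q ≠ 0) (hmul : 2 * p * q = 2 * m * n)
    (hsub : m ^ 2 - n ^ 2 = (2 * p) ^ 2 - q ^ 2) :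
    ∃ a b, IsConcordantPair a b ∧ 2 * (a * b) ∣ 2 * p * q := by
  have hp : p ≠ 0 := right_ne_zero_of_mul (left_ne_zero_of_mul hne)
  obtain ⟨r, s, t, k, rfl, rfl, rfl, rfl⟩ :=
    exists_common_factorization_of_mul_eq_mul hp (by linarith : p * q = m * n)
  have hst : IsCoprime s t := hpq.of_mul_left_right.of_mul_left_right.of_mul_right_left
  have hkr : IsCoprime k r := hmn.of_mul_left_left.of_mul_right_right.symm
  have hsep : s ^ 2 * (k ^ 2 + 4 * r ^ 2) = t ^ 2 * (k ^ 2 + r ^ 2) := by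
    linear_combination -hsub
  obtain ⟨hs, ht⟩ := eq_sq_of_sq_mul_eq_sq_mul hst hkr (right_ne_zero_of_mul hp) hsep
  have hdvd : 2 * (k * r) ∣ 2 * (r * s) * (t * k) := ⟨s * t, by ring⟩
  have hkr_ne : k * r ≠ 0 := right_ne_zero_of_mul (ne_zero_of_dvd_ne_zero hne hdvd)
  exact ⟨k, r, ⟨hkr, hkr_ne, hs ▸ IsSquare.sq s, ht ▸ IsSquare.sq t⟩, hdvd⟩

namespace IsConcordantPair

variable {a b : ℤ}

theorem swap_of_two_mul_left (h : IsConcordantPair (2 * a) b) : IsConcordantPair b a where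
  isCoprime := h.isCoprime.of_mul_left_right.symm
  mul_ne_zero := fun hba ↦ h.mul_ne_zero (by linear_combination 2 * hba)
  isSquare_sq_add_sq := by
    obtain ⟨v, hv⟩ := h.isSquare_sq_add_four_mul_sq
    obtain ⟨w, rfl⟩ : (2 : ℤ) ∣ v :=
      Int.prime_two.dvd_of_dvd_pow (n := 2) ⟨2 * a ^ 2 + 2 * b ^ 2, by linear_combination -hv⟩
    exact ⟨w, by linarith⟩
  isSquare_sq_add_four_mul_sq := by
    convert h.isSquare_sq_add_sq using 1
    ring

theorem exists_two_mul_dvd_of_odd (h : IsConcordantPair a b) (ha : Odd a) :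
    ∃ a' b', IsConcordantPair a' b' ∧ 2 * (a' * b') ∣ a * b := by
  obtain ⟨m, n, hmn, ham, hbm⟩ :=
    exists_pythagorean_parametrization h.isCoprime ha h.isSquare_sq_add_sq
  obtain ⟨p, q, hpq, hap, hbp⟩ := exists_pythagorean_parametrization (b := 2 * b)
    ((Int.isCoprime_two_right.mpr ha).mul_right h.isCoprime) ha
    (by convert h.isSquare_sq_add_four_mul_sq using 1; ring)
  obtain rfl : b = p * q := by linarith
  have hne : p * q ≠ 0 := right_ne_zero_of_mul h.mul_ne_zero
  have heven : 2 ∣ p * q := ⟨m * n, by linarith⟩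
  rcases Int.prime_two.dvd_or_dvd heven with ⟨p', rfl⟩ | ⟨q', rfl⟩
  · obtain ⟨a', b', h', hdvd⟩ :=
      exists_isConcordantPair_of_two_mul_mul_eq hmn hpq hne hbm (by linarith)
    exact ⟨a', b', h', hdvd.mul_left a⟩
  · rw [mul_comm p] at hne hbm ⊢
    obtain ⟨a', b', h', hdvd⟩ :=
      exists_isConcordantPair_of_two_mul_mul_eq hmn.symm hpq.symm hne (by linarith) (by linarith)
    exact ⟨a', b', h', hdvd.mul_left a⟩

theorem exists_two_mul_dvd (h : IsConcordantPair a b) :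
    ∃ a' b', IsConcordantPair a' b' ∧ 2 * (a' * b') ∣ a * b := by
  rcases Int.even_or_odd' a with ⟨a', rfl | ha⟩
  · exact ⟨b, a', h.swap_of_two_mul_left, Dvd.intro 1 (by ring)⟩
  · exact h.exists_two_mul_dvd_of_odd ⟨a', ha⟩

end IsConcordantPair

theorem not_isConcordantPair (a b : ℤ) : ¬IsConcordantPair a b := by
  induction hN : (a * b).natAbs using Nat.strong_induction_on generalizing a b with
  | _ N ih =>
    intro h
    obtain ⟨a', b', h', hdvd⟩ := h.exists_two_mul_dvd
    have hle : (2 * (a' * b')).natAbs ≤ (a * b).natAbs :=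
      Int.natAbs_le_of_dvd_ne_zero hdvd h.mul_ne_zero
    have hne : a' * b' ≠ 0 := h'.mul_ne_zero
    exact ih _ (by omega) a' b' rfl h'

theorem isSquare_num_sq_add_mul_den_sq {x : ℚ} {d : ℤ} (h : IsSquare (x ^ 2 + d)) :
    IsSquare (x.num ^ 2 + d * (x.den : ℤ) ^ 2) := by
  rw [← Rat.isSquare_intCast_iff]
  have hscale : ((x.num ^ 2 + d * (x.den : ℤ) ^ 2 : ℤ) : ℚ) = (x ^ 2 + d) * (x.den : ℚ) ^ 2 := by
    push_cast
    rw [← Rat.mul_den_eq_num x]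
    ring
  exact hscale ▸ h.mul (IsSquare.sq _)

theorem eq_zero_of_isSquare_sq_add_one_of_isSquare_sq_add_four {x : ℚ}
    (h₁ : IsSquare (x ^ 2 + 1)) (h₄ : IsSquare (x ^ 2 + 4)) : x = 0 := by
  by_contra hx
  refine not_isConcordantPair x.num x.den
    ⟨x.isCoprime_num_den, mul_ne_zero (Rat.num_ne_zero.mpr hx) (mod_cast x.den_ne_zero), ?_, ?_⟩
  · simpa using isSquare_num_sq_add_mul_den_sq (d := 1) (by simpa using h₁)
  · simpa using isSquare_num_sq_add_mul_den_sq (d := 4) (by simpa using h₄)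

theorem eq_zero_or_eq_zero_of_sq_eq {x y : ℚ} (h : y ^ 2 = (x ^ 2 - 1) * (x ^ 2 - 9)) :
    x = 0 ∨ y = 0 := by
  refine or_iff_not_imp_left.mpr fun hx ↦ ?_
  have h₁ : (y / (2 * x)) ^ 2 + 1 = ((x ^ 2 - 3) / (2 * x)) ^ 2 := by
    field_simp
    linear_combination h
  have h₄ : (y / (2 * x)) ^ 2 + 4 = ((x ^ 2 + 3) / (2 * x)) ^ 2 := by
    field_simp
    linear_combination h
  have hquot : y / (2 * x) = 0 := eq_zero_of_isSquare_sq_add_one_of_isSquare_sq_add_four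
    (h₁ ▸ IsSquare.sq _) (h₄ ▸ IsSquare.sq _)
  simpa [hx] using hquot

/-- The genus-one curve `C₁₂ : y² = (x²-1)(x²-9)` over `ℚ` has exactly six affine rational
points. -/
theorem C12_rational_points :
    {p : ℚ × ℚ | p.2 ^ 2 = (p.1 ^ 2 - 1) * (p.1 ^ 2 - 9)} =
      {(0, 3), (0, -3), (3, 0), (-3, 0), (1, 0), (-1, 0)} := by
  ext ⟨x, y⟩
  simp only [Set.mem_ofPred_eq, Set.mem_insert_iff, Set.mem_singleton_iff, Prod.mk.injEq]
  constructor
  · intro h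
    rcases eq_zero_or_eq_zero_of_sq_eq h with rfl | rfl
    · have hy : y ^ 2 = 3 ^ 2 := by linear_combination h
      rcases sq_eq_sq_iff_eq_or_eq_neg.mp hy with rfl | rfl <;> simp
    · have hx : (x ^ 2 - 1 ^ 2) * (x ^ 2 - 3 ^ 2) = 0 := by linear_combination -h
      simp only [mul_eq_zero, sub_eq_zero, sq_eq_sq_iff_eq_or_eq_neg] at hx
      rcases hx with (rfl | rfl) | (rfl | rfl) <;> simp
  · rintro (⟨rfl, rfl⟩ | ⟨rfl, rfl⟩ | ⟨rfl, rfl⟩ | ⟨rfl, rfl⟩ | ⟨rfl, rfl⟩ | ⟨rfl, rfl⟩) <;>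
      norm_num
end

section
/- The set of affine rational points on the curve X₆ = {(h, y, z) ∈ ℚ³ : y² = h(h+8), z² = h+9} is exactly {(−9, 3, 0), (−9, −3, 0), (−8, 0, 1), (−8, 0, −1), (0, 0, 3), (0, 0, −3)}. -/
/-!
On the curve, `y ^ 2 = (z ^ 2 - 9) * (z ^ 2 - 1)`. Writing `z = a / b` in lowest terms and
`w = a ^ 2 - 5 * b ^ 2`, this reads `c ^ 2 + (4 * b ^ 2) ^ 2 = w ^ 2`. If `a` and `b` are both odd,
parametrizing this Pythagorean triple gives a point of the same quartic whose numerator and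
denominator have opposite parity. If the parities are opposite, the parametrization turns the
equation into `a ^ 2 = (r ^ 2 + s ^ 2) * (r ^ 2 + 4 * s ^ 2)` or
`a ^ 2 = (r ^ 2 - s ^ 2) * (4 * s ^ 2 - r ^ 2)`, and separating coprime factors leads to
`x ^ 2 + y ^ 2` and `x ^ 2 + 4 * y ^ 2` being both squares. Any such pair with `x * y ≠ 0` gives
another whose product is a proper divisor of `x * y`, so infinite descent forces `x * y = 0`.
-/

section Squares

theorem isSquare_of_sq_mul {R : Type*} [CommRing R] [IsDomain R] [IsIntegrallyClosed R]
    {c x : R} (hc : c ≠ 0) (h : IsSquare (c ^ 2 * x)) : IsSquare x := by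
  obtain ⟨y, hy⟩ := h
  rw [← sq] at hy
  obtain ⟨z, rfl⟩ : c ∣ y := (IsIntegrallyClosed.pow_dvd_pow_iff two_ne_zero).1 ⟨x, hy.symm⟩
  exact ⟨z, mul_left_cancel₀ (pow_ne_zero 2 hc) (by linear_combination hy)⟩

theorem isSquare_left_of_isCoprime_of_isSquare_mul {m n : ℤ} (h : IsCoprime m n) (hm : 0 ≤ m)
    (hmn : IsSquare (m * n)) : IsSquare m := by
  obtain ⟨c, hc⟩ := hmn
  obtain ⟨x, hx | hx⟩ := Int.sq_of_isCoprime h (hc.trans (sq c).symm)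
  · exact ⟨x, hx.trans (sq x)⟩
  · have : m = 0 := by linarith [sq_nonneg x]
    exact this ▸ IsSquare.zero

theorem isSquare_and_isSquare_of_isCoprime_of_isSquare_mul {m n : ℤ} (h : IsCoprime m n)
    (hm : 0 ≤ m) (hn : 0 ≤ n) (hmn : IsSquare (m * n)) : IsSquare m ∧ IsSquare n :=
  ⟨isSquare_left_of_isCoprime_of_isSquare_mul h hm hmn,
    isSquare_left_of_isCoprime_of_isSquare_mul h.symm hn (mul_comm m n ▸ hmn)⟩

theorem not_three_dvd_sq_add_sq {r s : ℤ} (h : IsCoprime r s) : ¬ 3 ∣ r ^ 2 + s ^ 2 := fun h3 ↦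
  absurd (ZMod.isSquare_neg_one_of_dvd (Int.natAbs_dvd_natAbs.2 h3)
    (ZMod.isSquare_neg_one_of_eq_sq_add_sq_of_isCoprime rfl h)) (by decide)

theorem even_left_of_four_dvd_sq_add_sq {x y : ℤ} (h : 4 ∣ x ^ 2 + y ^ 2) : Even x := by
  by_contra hx
  have hx4 := Int.sq_mod_four_eq_one_of_odd (Int.not_even_iff_odd.1 hx)
  rcases Int.even_or_odd y with ⟨k, rfl⟩ | hy
  · ring_nf at h hx4
    omega
  · have hy4 := Int.sq_mod_four_eq_one_of_odd hy
    omega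

theorem even_of_sq_sub_sq_eq {p q P Q : ℤ} (hp : Odd p) (hq : Even q)
    (h : P ^ 2 - Q ^ 2 = p ^ 2 - q ^ 2) : Even Q := by
  by_contra hQ
  have hQ4 := Int.sq_mod_four_eq_one_of_odd (Int.not_even_iff_odd.1 hQ)
  have hp4 := Int.sq_mod_four_eq_one_of_odd hp
  obtain ⟨k, rfl⟩ := hq
  ring_nf at h
  rcases Int.even_or_odd P with ⟨l, rfl⟩ | hP
  · ring_nf at h
    omega
  · have hP4 := Int.sq_mod_four_eq_one_of_odd hP
    omega

theorem isCoprime_add_add_four_mul {m n : ℤ} (h : IsCoprime m n) (h3 : ¬ 3 ∣ m + n) :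
    IsCoprime (m + n) (m + 4 * n) := by
  have hn : IsCoprime (m + n) n := by simpa using h.add_mul_right_left 1
  have h3' : IsCoprime (m + n) 3 := ((Int.prime_three.coprime_iff_not_dvd).2 h3).symm
  convert! (h3'.mul_right hn).add_mul_left_right 1 using 1
  ring

theorem exists_primitive_of_sq_add_sq_eq_sq {x y z : ℤ} (hx : Odd x) (h : IsCoprime x y)
    (hxyz : x ^ 2 + y ^ 2 = z ^ 2) :
    ∃ m n : ℤ, IsCoprime m n ∧ Odd (m + n) ∧ 0 ≤ m ∧ x = m ^ 2 - n ^ 2 ∧ y = 2 * m * n ∧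
      (z = m ^ 2 + n ^ 2 ∨ z = -(m ^ 2 + n ^ 2)) := by
  have hz : 0 < |z| := by
    have : x ≠ 0 := by rintro rfl; simp at hx
    refine abs_pos.2 ?_
    rintro rfl
    nlinarith [sq_nonneg y, sq_pos_of_ne_zero this]
  have ht : PythagoreanTriple x y |z| := by
    rw [PythagoreanTriple, abs_mul_abs_self]
    linear_combination hxyz
  obtain ⟨m, n, hxmn, hymn, hzmn, hmn, hpar, hm⟩ :=
    ht.coprime_classification' (Int.isCoprime_iff_gcd_eq_one.1 h) (Int.odd_iff.1 hx) hz
  exact ⟨m, n, Int.isCoprime_iff_gcd_eq_one.2 hmn, Int.odd_iff.2 (by omega), hm, hxmn, hymn,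
    eq_or_eq_neg_of_abs_eq hzmn⟩

end Squares

/-- The forms `x ^ 2 + y ^ 2` and `x ^ 2 + 4 * y ^ 2` are concordant (in Euler's sense) at
`(r, s)`: both take square values there. -/
def IsConcordant (r s : ℤ) : Prop :=
  IsSquare (r ^ 2 + s ^ 2) ∧ IsSquare (r ^ 2 + 4 * s ^ 2)

namespace IsConcordant

theorem of_mul {g r s : ℤ} (hg : g ≠ 0) (h : IsConcordant (g * r) (g * s)) :
    IsConcordant r s :=
  ⟨isSquare_of_sq_mul hg (by convert! h.1 using 1; ring),
    isSquare_of_sq_mul hg (by convert! h.2 using 1; ring)⟩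

theorem swap_of_two_mul {r s : ℤ} (h : IsConcordant (2 * r) s) : IsConcordant s r :=
  ⟨isSquare_of_sq_mul two_ne_zero (by convert! h.2 using 1; ring), by convert! h.1 using 1; ring⟩

theorem of_isSquare_mul {r s : ℤ} (h : IsCoprime r s)
    (hsq : IsSquare ((r ^ 2 + s ^ 2) * (r ^ 2 + 4 * s ^ 2))) : IsConcordant r s :=
  isSquare_and_isSquare_of_isCoprime_of_isSquare_mul
    (isCoprime_add_add_four_mul h.pow (not_three_dvd_sq_add_sq h))
    (by positivity) (by positivity) hsq

theorem exists_dvd_dvd_of_mul_eq_mul {p q P Q : ℤ} (hpq : IsCoprime p q) (hp : p ≠ 0)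
    (hmul : P * Q = p * q) (hsub : P ^ 2 - 4 * Q ^ 2 = p ^ 2 - q ^ 2) :
    ∃ a d : ℤ, IsConcordant a d ∧ a ∣ p ∧ d ∣ q := by
  -- The two factorizations are `p = a * b`, `q = c * d` and `P = a * c`, `Q = b * d`, and then
  -- `hsub` says that `b ^ 2 / c ^ 2` and `(a ^ 2 + d ^ 2) / (a ^ 2 + 4 * d ^ 2)` are the same
  -- reduced fraction.
  obtain ⟨a, b, c, ha, hbc, rfl, rfl⟩ :
      ∃ a b c : ℤ, a ≠ 0 ∧ IsCoprime b c ∧ p = a * b ∧ P = a * c := by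
    obtain ⟨b, c, hbc, hb, hc⟩ := Int.exists_gcd_one (Int.gcd_pos_of_ne_zero_left P hp)
    refine ⟨Int.gcd p P, b, c, ?_, Int.isCoprime_iff_gcd_eq_one.2 hbc, by linarith, by linarith⟩
    exact_mod_cast (Int.gcd_pos_of_ne_zero_left P hp).ne'
  have hb : b ≠ 0 := right_ne_zero_of_mul hp
  have hcQ : c * Q = b * q := mul_left_cancel₀ ha (by linear_combination hmul)
  obtain ⟨d, rfl⟩ : b ∣ Q := hbc.dvd_of_dvd_mul_left ⟨q, hcQ⟩
  obtain rfl : q = c * d := mul_left_cancel₀ hb (by linear_combination -hcQ)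
  have had : IsCoprime a d := hpq.of_mul_left_left.of_mul_right_right
  have hcop : IsCoprime (a ^ 2 + d ^ 2) (a ^ 2 + 4 * d ^ 2) :=
    isCoprime_add_add_four_mul had.pow (not_three_dvd_sq_add_sq had)
  have hcross : c ^ 2 * (a ^ 2 + d ^ 2) = b ^ 2 * (a ^ 2 + 4 * d ^ 2) := by
    linear_combination hsub
  have hb2 : a ^ 2 + d ^ 2 = b ^ 2 :=
    Int.dvd_antisymm (by positivity) (by positivity)
      (hcop.dvd_of_dvd_mul_right ⟨c ^ 2, by linear_combination -hcross⟩)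
      (hbc.pow.dvd_of_dvd_mul_left ⟨a ^ 2 + 4 * d ^ 2, hcross⟩)
  have hc2 : a ^ 2 + 4 * d ^ 2 = c ^ 2 :=
    mul_left_cancel₀ (pow_ne_zero 2 hb) (by linear_combination -hcross + c ^ 2 * hb2)
  exact ⟨a, d, ⟨hb2 ▸ IsSquare.sq b, hc2 ▸ IsSquare.sq c⟩, ⟨b, rfl⟩, ⟨c, mul_comm c d⟩⟩

theorem exists_dvd_dvd_of_mul_eq_two_mul {p q P Q : ℤ} (hpq : IsCoprime p q) (hp : Odd p)
    (hq : Even q) (hmul : P * Q = 2 * (p * q)) (hsub : P ^ 2 - Q ^ 2 = p ^ 2 - q ^ 2) :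
    ∃ a d : ℤ, IsConcordant a d ∧ a ∣ p ∧ d ∣ q := by
  obtain ⟨Q', rfl⟩ := (even_of_sq_sub_sq_eq hp hq hsub).two_dvd
  have hp0 : p ≠ 0 := by rintro rfl; simp at hp
  exact exists_dvd_dvd_of_mul_eq_mul (P := P) (Q := Q') hpq hp0 (by linarith)
    (by linear_combination hsub)

theorem exists_dvd_of_isCoprime_of_odd {r s : ℤ} (h : IsConcordant r s) (hrs : IsCoprime r s)
    (hr : Odd r) : ∃ a d : ℤ, IsConcordant a d ∧ 2 * (a * d) ∣ s := by
  obtain ⟨⟨u, hu⟩, ⟨v, hv⟩⟩ := h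
  obtain ⟨p, q, hpq, hpar, -, hrpq, hspq, -⟩ :=
    exists_primitive_of_sq_add_sq_eq_sq hr hrs (hu.trans (sq u).symm)
  obtain ⟨P, Q, -, -, -, hrPQ, hsPQ, -⟩ :=
    exists_primitive_of_sq_add_sq_eq_sq (y := 2 * s) (z := v) hr
      ((Int.isCoprime_two_right.2 hr).mul_right hrs) (by linear_combination hv)
  rcases Int.even_or_odd p with hp | hp
  · have hq : Odd q := (Int.odd_add'.1 hpar).2 hp
    obtain ⟨a, d, had, ha, hd⟩ := exists_dvd_dvd_of_mul_eq_two_mul (P := Q) (Q := P) hpq.symm hq hp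
      (by linarith) (by linarith)
    exact ⟨a, d, had, by rw [hspq, mul_assoc, mul_comm p]; gcongr⟩
  · have hq : Even q := (Int.odd_add.1 hpar).1 hp
    obtain ⟨a, d, had, ha, hd⟩ := exists_dvd_dvd_of_mul_eq_two_mul (P := P) (Q := Q) hpq hp hq
      (by linarith) (by linarith)
    exact ⟨a, d, had, by rw [hspq, mul_assoc]; gcongr⟩

theorem exists_dvdNotUnit {r s : ℤ} (h : IsConcordant r s) (hrs : r * s ≠ 0) :
    ∃ a d : ℤ, IsConcordant a d ∧ DvdNotUnit (a * d) (r * s) := by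
  by_cases hcop : IsCoprime r s
  · rcases Int.even_or_odd' r with ⟨t, rfl | rfl⟩
    · refine ⟨s, t, h.swap_of_two_mul, by grind, 2, Int.prime_two.not_isUnit, by ring⟩
    · obtain ⟨a, d, had, k, rfl⟩ := h.exists_dvd_of_isCoprime_of_odd hcop (odd_two_mul_add_one t)
      refine ⟨a, d, had, by grind, 2 * (k * (2 * t + 1)), ?_, by ring⟩
      exact fun hu ↦ Int.prime_two.not_isUnit (isUnit_of_mul_isUnit_left hu)
  · have hg : 0 < Int.gcd r s := Int.gcd_pos_of_ne_zero_left s (left_ne_zero_of_mul hrs)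
    have hg1 : ¬ IsUnit (Int.gcd r s : ℤ) := by
      rwa [Int.isUnit_iff_natAbs_eq, Int.natAbs_natCast, ← Int.isCoprime_iff_gcd_eq_one]
    obtain ⟨a, d, -, hr, hs⟩ := Int.exists_gcd_one hg
    rw [mul_comm] at hr hs
    generalize (Int.gcd r s : ℤ) = g at hr hs hg1
    subst hr hs
    refine ⟨a, d, h.of_mul (by grind), by grind, g * g, ?_, by ring⟩
    exact fun hu ↦ hg1 (isUnit_of_mul_isUnit_left hu)

theorem mul_eq_zero {r s : ℤ} (h : IsConcordant r s) : r * s = 0 := by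
  induction hx : r * s using WellFounded.induction (wellFounded_dvdNotUnit (α := ℤ))
    generalizing r s with
  | _ x ih =>
    by_contra hx0
    obtain ⟨a, d, had, hlt⟩ := h.exists_dvdNotUnit (hx ▸ hx0)
    exact hlt.1 (ih _ (hx ▸ hlt) had rfl)

end IsConcordant

section Quartic

variable {a b c m n r s : ℤ}

theorem not_isSquare_four_mul_sq_sub_sq (h : IsCoprime r s)
    (h₁ : IsSquare (r ^ 2 - s ^ 2)) : ¬ IsSquare (4 * s ^ 2 - r ^ 2) := by
  rintro ⟨v, hv⟩
  obtain ⟨u, hu⟩ := h₁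
  have hr : Even r := even_left_of_four_dvd_sq_add_sq (y := v) ⟨s ^ 2, by linear_combination -hv⟩
  have hs : Even s := by
    obtain ⟨t, rfl⟩ := hr.two_dvd
    exact even_left_of_four_dvd_sq_add_sq (y := u) ⟨t ^ 2, by linear_combination -hu⟩
  exact Int.prime_two.not_isUnit (h.isUnit_of_dvd' hr.two_dvd hs.two_dvd)

theorem mul_eq_zero_of_isSquare_add_of_isSquare_four_mul_add (h : IsCoprime m n)
    (hm : 0 ≤ m) (hn : 0 ≤ n) (hmn : IsSquare (m * n)) (h₁ : IsSquare (m + n))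
    (h₂ : IsSquare (4 * m + n)) : m * n = 0 := by
  obtain ⟨⟨d, rfl⟩, ⟨c, rfl⟩⟩ := isSquare_and_isSquare_of_isCoprime_of_isSquare_mul h hm hn hmn
  have hcd : IsConcordant c d := ⟨by convert! h₁ using 1; ring, by convert! h₂ using 1; ring⟩
  linear_combination (c * d) * hcd.mul_eq_zero

theorem mul_eq_zero_of_isSquare_sq_sub_sq_mul (h : IsCoprime r s)
    (hsq : IsSquare ((r ^ 2 - s ^ 2) * (4 * s ^ 2 - r ^ 2))) :
    (r ^ 2 - s ^ 2) * (4 * s ^ 2 - r ^ 2) = 0 := by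
  have hprod : 0 ≤ (r ^ 2 - s ^ 2) * (4 * s ^ 2 - r ^ 2) := hsq.nonneg
  by_contra hne
  have hpos : 0 < (r ^ 2 - s ^ 2) * (4 * s ^ 2 - r ^ 2) := lt_of_le_of_ne hprod (Ne.symm hne)
  obtain ⟨hx, hy⟩ : 0 < r ^ 2 - s ^ 2 ∧ 0 < 4 * s ^ 2 - r ^ 2 := by
    refine (pos_and_pos_or_neg_and_neg_of_mul_pos hpos).resolve_right fun ⟨hx, hy⟩ ↦ ?_
    linarith [hx, hy, sq_nonneg s]
  -- The factors sum to `3 * s ^ 2`, so their only possible common prime divisor is `3`.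
  by_cases h3 : 3 ∣ r ^ 2 - s ^ 2
  · obtain ⟨x, hx3⟩ := h3
    obtain ⟨y, hy3⟩ : (3 : ℤ) ∣ 4 * s ^ 2 - r ^ 2 := ⟨s ^ 2 - x, by linarith⟩
    have hs2 : s ^ 2 = x + y := by linarith
    have hr2 : r ^ 2 = 4 * x + y := by linarith
    have hxy : IsCoprime x y := by
      obtain ⟨α, β, hαβ⟩ : IsCoprime (r ^ 2) (s ^ 2) := h.pow
      exact ⟨4 * α + β, α + β, by rw [← hαβ, hr2, hs2]; ring⟩
    have hxysq : IsSquare (x * y) := by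
      refine isSquare_of_sq_mul (c := 3) (by norm_num) ?_
      convert! hsq using 1
      rw [hx3, hy3]
      ring
    have hxy0 : x * y = 0 :=
      mul_eq_zero_of_isSquare_add_of_isSquare_four_mul_add hxy (by linarith) (by linarith)
        hxysq (hs2 ▸ IsSquare.sq s) (hr2 ▸ IsSquare.sq r)
    exact hne (by rw [hx3, hy3]; linear_combination 9 * hxy0)
  · have hcop : IsCoprime (r ^ 2 - s ^ 2) (4 * s ^ 2 - r ^ 2) := by
      have := (isCoprime_add_add_four_mul (m := r ^ 2) (n := -s ^ 2) h.pow.neg_right h3).neg_right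
      convert! this using 1; ring
    obtain ⟨h₁, h₂⟩ := isSquare_and_isSquare_of_isCoprime_of_isSquare_mul hcop hx.le hy.le hsq
    exact not_isSquare_four_mul_sq_sub_sq h h₁ h₂

theorem eq_zero_of_sq_eq_add_mul_or_sub_mul (h : IsCoprime m n) (hm : 0 < m) (hn : 0 < n)
    (hmn : IsSquare (m * n))
    (ha : a ^ 2 = (m + n) * (m + 4 * n) ∨ a ^ 2 = (m - n) * (4 * n - m)) : a = 0 := by
  obtain ⟨⟨r, rfl⟩, ⟨s, rfl⟩⟩ :=
    isSquare_and_isSquare_of_isCoprime_of_isSquare_mul h hm.le hn.le hmn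
  simp only [← sq] at *
  have hrs : IsCoprime r s := (IsCoprime.pow_iff two_pos two_pos).1 h
  rcases ha with ha | ha
  · have := (IsConcordant.of_isSquare_mul hrs (ha ▸ IsSquare.sq a)).mul_eq_zero
    rcases mul_eq_zero.1 this with rfl | rfl <;> simp at hm hn
  · rw [← sq_eq_zero_iff, ha]
    exact mul_eq_zero_of_isSquare_sq_sub_sq_mul hrs (ha ▸ IsSquare.sq a)

theorem isCoprime_of_sq_eq_quartic (h : IsCoprime a b)
    (hc : c ^ 2 = (a ^ 2 - 9 * b ^ 2) * (a ^ 2 - b ^ 2)) : IsCoprime c b := by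
  refine (IsCoprime.pow_left_iff two_pos).1 ?_
  have h4 : IsCoprime (a ^ 4) b := h.pow_left
  rw [hc]
  convert! h4.add_mul_right_left (9 * b ^ 3 - 10 * a ^ 2 * b) using 1
  ring

theorem eq_zero_or_eq_zero_of_sq_eq_quartic_of_odd_add (h : IsCoprime a b) (hab : Odd (a + b))
    (hc : c ^ 2 = (a ^ 2 - 9 * b ^ 2) * (a ^ 2 - b ^ 2)) : a = 0 ∨ b = 0 := by
  refine or_iff_not_imp_right.2 fun hb ↦ ?_
  have hcodd : Odd c := by
    have : Odd (c ^ 2) := by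
      rw [hc]
      simp_all [parity_simps, show ¬ Even (9 : ℤ) by decide]
    exact (Int.odd_pow' two_ne_zero).1 this
  have hcb : IsCoprime c (4 * b ^ 2) :=
    (((Int.isCoprime_two_right.2 hcodd).pow_right (n := 2)).mul_right
      (isCoprime_of_sq_eq_quartic h hc).pow_right)
  obtain ⟨m, n, hmn, hpar, hm, -, hbmn, hw⟩ :=
    exists_primitive_of_sq_add_sq_eq_sq (z := a ^ 2 - 5 * b ^ 2) hcodd hcb
      (by linear_combination hc)
  have hprod : 0 < m * n := by nlinarith [sq_pos_of_ne_zero hb]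
  have hm : 0 < m := lt_of_le_of_ne hm (by rintro rfl; simp at hprod)
  have hn : 0 < n := pos_of_mul_pos_right hprod hm.le
  rcases Int.even_or_odd' n with ⟨k, rfl | hk⟩
  · have hbk : b ^ 2 = m * k := by linarith
    refine eq_zero_of_sq_eq_add_mul_or_sub_mul (m := m) (n := k) hmn.of_mul_right_right hm
      (by linarith) (hbk ▸ IsSquare.sq b) (hw.imp ?_ ?_) <;> intro hw <;>
      linear_combination hw + 5 * hbk
  · obtain ⟨k, rfl⟩ : 2 ∣ m := by grind
    have hbk : b ^ 2 = n * k := by linarith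
    refine eq_zero_of_sq_eq_add_mul_or_sub_mul (m := n) (n := k) hmn.symm.of_mul_right_right hn
      (by linarith) (hbk ▸ IsSquare.sq b) (hw.imp ?_ ?_) <;> intro hw <;>
      linear_combination hw + 5 * hbk

theorem eq_zero_of_sq_eq_quartic_of_odd_of_odd (h : IsCoprime a b) (ha : Odd a) (hb : Odd b)
    (hc : c ^ 2 = (a ^ 2 - 9 * b ^ 2) * (a ^ 2 - b ^ 2)) : c = 0 := by
  obtain ⟨w, hw⟩ : 4 ∣ a ^ 2 - 5 * b ^ 2 := by
    have ha4 := Int.sq_mod_four_eq_one_of_odd ha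
    have hb4 := Int.sq_mod_four_eq_one_of_odd hb
    omega
  have hcw : c ^ 2 = 4 ^ 2 * (w ^ 2 - b ^ 4) := by
    linear_combination hc + (a ^ 2 - 5 * b ^ 2 + 4 * w) * hw
  obtain ⟨d, rfl⟩ : 4 ∣ c := (Int.pow_dvd_pow_iff two_ne_zero).1 ⟨_, hcw⟩
  have hbd : IsCoprime (b ^ 2) d :=
    (isCoprime_of_sq_eq_quartic h hc).symm.of_mul_right_right.pow_left
  obtain ⟨m, n, hmn, hpar, -, hbmn, rfl, hwmn⟩ :=
    exists_primitive_of_sq_add_sq_eq_sq (z := w) hb.pow hbd (by linarith)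
  suffices m = 0 ∨ n = 0 by rcases this with rfl | rfl <;> simp
  rcases hwmn with rfl | rfl
  · have ha2 : a ^ 2 = 9 * m ^ 2 - n ^ 2 := by linarith
    exact (eq_zero_or_eq_zero_of_sq_eq_quartic_of_odd_add (c := a * b) hmn.symm
      (add_comm m n ▸ hpar) (by rw [mul_pow, ha2, hbmn]; ring)).symm
  · have ha2 : a ^ 2 = m ^ 2 - 9 * n ^ 2 := by linarith
    exact eq_zero_or_eq_zero_of_sq_eq_quartic_of_odd_add (c := a * b) hmn hpar
      (by rw [mul_pow, ha2, hbmn])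

theorem eq_zero_or_eq_zero_or_eq_zero_of_sq_eq_quartic (h : IsCoprime a b)
    (hc : c ^ 2 = (a ^ 2 - 9 * b ^ 2) * (a ^ 2 - b ^ 2)) : a = 0 ∨ b = 0 ∨ c = 0 := by
  by_cases hab : Odd (a + b)
  · grind [eq_zero_or_eq_zero_of_sq_eq_quartic_of_odd_add h hab hc]
  · have ha : Odd a := by
      by_contra ha
      rw [Int.not_odd_iff_even] at ha
      have hb : Even b := by grind
      exact Int.prime_two.not_isUnit (h.isUnit_of_dvd' ha.two_dvd hb.two_dvd)
    exact .inr (.inr (eq_zero_of_sq_eq_quartic_of_odd_of_odd h ha (by grind) hc))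

theorem eq_zero_or_eq_zero_of_sq_eq_quartic_rat {y z : ℚ} (h : y ^ 2 = (z ^ 2 - 9) * (z ^ 2 - 1)) :
    z = 0 ∨ y = 0 := by
  have hz : z * z.den = z.num := Rat.mul_den_eq_num z
  have hden : (z.den : ℚ) ≠ 0 := mod_cast z.den_nz
  have hcop : IsCoprime z.num z.den := Int.isCoprime_iff_gcd_eq_one.2 z.reduced
  have hy : (y * z.den ^ 2) ^ 2 =
      ((z.num ^ 2 - 9 * z.den ^ 2) * (z.num ^ 2 - z.den ^ 2) : ℤ) := by
    push_cast
    rw [← hz]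
    linear_combination (z.den : ℚ) ^ 4 * h
  obtain ⟨c, hc⟩ := (Rat.isSquare_intCast_iff).1 (hy ▸ IsSquare.sq (y * (z.den : ℚ) ^ 2))
  rw [← sq] at hc
  rcases eq_zero_or_eq_zero_or_eq_zero_of_sq_eq_quartic hcop hc.symm with hnum | hden0 | rfl
  · exact .inl (Rat.num_eq_zero.1 hnum)
  · exact absurd (mod_cast hden0) z.den_nz
  · right
    simpa [hc, hden] using hy

end Quartic

/-- The affine rational points of `X₆ = {(h,y,z) : y² = h(h+8), z² = h+9}` are exactly the
six listed triples. -/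
theorem X6_rational_points :
    {p : ℚ × ℚ × ℚ | p.2.1 ^ 2 = p.1 * (p.1 + 8) ∧ p.2.2 ^ 2 = p.1 + 9} =
      {(-9, 3, 0), (-9, -3, 0), (-8, 0, 1), (-8, 0, -1), (0, 0, 3), (0, 0, -3)} := by
  ext ⟨h, y, z⟩
  simp only [Set.mem_ofPred_eq, Set.mem_insert_iff, Set.mem_singleton_iff, Prod.mk.injEq]
  constructor
  · rintro ⟨hy, hz⟩
    obtain rfl : h = z ^ 2 - 9 := by linarith
    rcases eq_zero_or_eq_zero_of_sq_eq_quartic_rat (y := y) (z := z) (by linear_combination hy)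
      with rfl | rfl
    · have : (y - 3) * (y + 3) = 0 := by linear_combination hy
      grind
    · have : ((z - 3) * (z + 3)) * ((z - 1) * (z + 1)) = 0 := by linear_combination -hy
      grind
  · rintro (⟨rfl, rfl, rfl⟩ | ⟨rfl, rfl, rfl⟩ | ⟨rfl, rfl, rfl⟩ | ⟨rfl, rfl, rfl⟩ |
      ⟨rfl, rfl, rfl⟩ | ⟨rfl, rfl, rfl⟩) <;> norm_num
end
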